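/- arXiv:2003.10277 — 4 statements merged into one kernel-verified Lean document; each statement's English description precedes it below -/
import Mathlib

section
/- Let μ and μ' be stable matchings. A vertex v ∈ A is an isolated vertex of Γ*(μ,μ') (i.e., v is a vertex of Γ*(μ,μ') with no incident edges) if and only if v ∈ μ ∩ μ'. -/
/-!
Every pair of `μ ∪ μ'` is a vertex of `Γ*(μ, μ')` (`mem_starV_of_mem_union`), and two distinct
acceptable pairs sharing a man or a woman are adjacent in `Γ`, by totality of the preferences
(`eq_of_isIsolated`). Hence if `v = (m, w)` is isolated, then `m` and `w` have in `μ` and in `μ'` no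
partner other than each other. If `v` were missing from one of these matchings, both `m` and `w`
would be single there, and `v` would be a blocking pair (`mem_of_isStable`).

Conversely, if `v ∈ μ ∩ μ'`, the betweenness conditions leave `v` as the only vertex of `Γ*(μ, μ')`
that contains `m` or `w` (`eq_of_mem_starV`), so no edge meets `v`.
-/

open scoped Classical

/-- An instance of the stable marriage problem with ties: men `M`, women `W`,
acceptable pairs `Acc`, and for each man (resp. woman) a total preorder on the
acceptable partners. `mle m w w'` means `w ≤_m w'`, `wle w m m'` means `m ≤_w m'`. -/
structure SMTI (M W : Type*) where
  Acc : Set (M × W)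
  mle : M → W → W → Prop
  wle : W → M → M → Prop
  mle_refl : ∀ m w, (m, w) ∈ Acc → mle m w w
  mle_trans : ∀ m w₁ w₂ w₃, mle m w₁ w₂ → mle m w₂ w₃ → mle m w₁ w₃
  mle_total : ∀ m w w', (m, w) ∈ Acc → (m, w') ∈ Acc → mle m w w' ∨ mle m w' w
  mle_mem : ∀ m w w', mle m w w' → (m, w) ∈ Acc ∧ (m, w') ∈ Acc
  wle_refl : ∀ w m, (m, w) ∈ Acc → wle w m m
  wle_trans : ∀ w m₁ m₂ m₃, wle w m₁ m₂ → wle w m₂ m₃ → wle w m₁ m₃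
  wle_total : ∀ w m m', (m, w) ∈ Acc → (m', w) ∈ Acc → wle w m m' ∨ wle w m' m
  wle_mem : ∀ w m m', wle w m m' → (m, w) ∈ Acc ∧ (m', w) ∈ Acc

namespace SMTI

variable {M W : Type*} (I : SMTI M W)

/-- `≤_m` extended to `Option W`, where `none` (being single) is strictly below
every acceptable partner. -/
def mleO (m : M) : Option W → Option W → Prop
  | none, none => True
  | none, some w => (m, w) ∈ I.Acc
  | some _, none => False
  | some w, some w' => I.mle m w w'

/-- `≤_w` extended to `Option M`. -/
def wleO (w : W) : Option M → Option M → Prop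
  | none, none => True
  | none, some m => (m, w) ∈ I.Acc
  | some _, none => False
  | some m, some m' => I.wle w m m'

/-- strict version of `mleO` -/
def mltO (m : M) (a b : Option W) : Prop := I.mleO m a b ∧ ¬ I.mleO m b a

/-- strict version of `wleO` -/
def wltO (w : W) (a b : Option M) : Prop := I.wleO w a b ∧ ¬ I.wleO w b a

/-- A matching: a set of acceptable pairs in which every man and every woman
occurs at most once. -/
def IsMatching (μ : Set (M × W)) : Prop :=
  μ ⊆ I.Acc ∧ (∀ m w w', (m, w) ∈ μ → (m, w') ∈ μ → w = w') ∧
    (∀ m m' w, (m, w) ∈ μ → (m', w) ∈ μ → m = m')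

/-- the partner `μ(m)` of a man `m` (`none` if `m` is single) -/
noncomputable def mpartner (μ : Set (M × W)) (m : M) : Option W :=
  if h : ∃ w, (m, w) ∈ μ then some h.choose else none

/-- the partner `μ(w)` of a woman `w` (`none` if `w` is single) -/
noncomputable def wpartner (μ : Set (M × W)) (w : W) : Option M :=
  if h : ∃ m, (m, w) ∈ μ then some h.choose else none

/-- A stable matching: no acceptable pair is blocking. -/
def IsStable (μ : Set (M × W)) : Prop :=
  I.IsMatching μ ∧ ∀ p ∈ I.Acc,
    I.mleO p.1 (some p.2) (mpartner μ p.1) ∨ I.wleO p.2 (some p.1) (wpartner μ p.2)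

/-- `between_m(a, b, c)` -/
def betweenM (m : M) (a b c : Option W) : Prop :=
  a = b ∨ a = c ∨ (I.mltO m b a ∧ I.mleO m a c) ∨ (I.mltO m c a ∧ I.mleO m a b)

/-- `between_w(a, b, c)` -/
def betweenW (w : W) (a b c : Option M) : Prop :=
  a = b ∨ a = c ∨ (I.wltO w b a ∧ I.wleO w a c) ∨ (I.wltO w c a ∧ I.wleO w a b)

/-- the (directed) edge relation of the marriage graph `Γ` -/
def gammaEdge (p q : M × W) : Prop :=
  p ∈ I.Acc ∧ q ∈ I.Acc ∧
    ((p.1 = q.1 ∧ p.2 ≠ q.2 ∧ I.mle p.1 p.2 q.2) ∨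
      (p.2 = q.2 ∧ p.1 ≠ q.1 ∧ I.wle p.2 p.1 q.1))

/-- the vertex set of `Γ*(μ, μ')` -/
noncomputable def starV (μ μ' : Set (M × W)) : Set (M × W) :=
  {p | p ∈ I.Acc ∧
    I.betweenM p.1 (some p.2) (mpartner μ p.1) (mpartner μ' p.1) ∧
    I.betweenW p.2 (some p.1) (wpartner μ p.2) (wpartner μ' p.2)}

/-- undirected adjacency inside the subgraph of `Γ` induced by the vertex set `S` -/
def adjIn (S : Set (M × W)) (p q : M × W) : Prop :=
  p ∈ S ∧ q ∈ S ∧ (I.gammaEdge p q ∨ I.gammaEdge q p)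

/-- `p` and `q` lie in the same weakly connected component of the subgraph of `Γ`
induced by `S` -/
def connIn (S : Set (M × W)) (p q : M × W) : Prop :=
  p ∈ S ∧ q ∈ S ∧ Relation.ReflTransGen (I.adjIn S) p q

/-- `p` is an isolated vertex of the subgraph of `Γ` induced by `S` -/
def IsIsolated (S : Set (M × W)) (p : M × W) : Prop :=
  p ∈ S ∧ ∀ q, ¬ I.adjIn S p q

/-- `C` is a nontrivial weakly connected component of the subgraph of `Γ`
induced by `S` -/
def IsNontrivialComp (S : Set (M × W)) (C : Set (M × W)) : Prop :=
  (∃ v ∈ S, C = {u | I.connIn S v u}) ∧ ¬ C.Subsingleton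

/-- `B` is the vertex set of a principal block (`P^m` or `P^w`) of the subgraph
of `Γ` induced by `S` -/
def IsPrincipalBlock (S : Set (M × W)) (B : Set (M × W)) : Prop :=
  (∃ m : M, B = {p ∈ S | p.1 = m}) ∨ (∃ w : W, B = {p ∈ S | p.2 = w})

/-- characteristic vector `x_ν ∈ ℝ^A` of a set of pairs -/
noncomputable def chi (ν : Set (M × W)) : M × W → ℝ := fun p => if p ∈ ν then 1 else 0

/-- standard basis vector `e_v` -/
noncomputable def eVec (v : M × W) : M × W → ℝ := fun p => if p = v then 1 else 0

/-- dot product on `ℝ^{M × W}` -/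
noncomputable def dotP [Fintype M] [Fintype W] (α x : M × W → ℝ) : ℝ := ∑ p, α p * x p

/-- `E`: the span of all vectors `α` (supported on the acceptable pairs) for which
there is `β` so that `α · x ≥ β` is valid for all stable matchings and tight at
both `μ` and `μ'`. -/
noncomputable def Espace [Fintype M] [Fintype W] (μ μ' : Set (M × W)) :
    Submodule ℝ (M × W → ℝ) :=
  Submodule.span ℝ {α | (∀ p, p ∉ I.Acc → α p = 0) ∧ ∃ β : ℝ,
    (∀ ν, I.IsStable ν → β ≤ dotP α (chi ν)) ∧
    dotP α (chi μ) = β ∧ dotP α (chi μ') = β}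

/-- `a` is linked to `b`: `E` contains `λ e_a + γ e_b` with `λ ≠ 0`. -/
def linked [Fintype M] [Fintype W] (μ μ' : Set (M × W)) (a b : M × W) : Prop :=
  ∃ l g : ℝ, l ≠ 0 ∧ l • eVec a + g • eVec b ∈ I.Espace μ μ'

/-- `x_μ` and `x_μ'` are adjacent extreme points of `P_SMT`: they are distinct, and
whenever their midpoint is a convex combination of extreme points (characteristic
vectors of stable matchings), only `x_μ` and `x_μ'` get nonzero weight. -/
def AdjacentSM [Fintype M] [Fintype W] (μ μ' : Set (M × W)) : Prop :=
  chi μ ≠ chi μ' ∧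
  ∀ (T : Finset (Set (M × W))) (c : Set (M × W) → ℝ),
    (∀ ν ∈ T, I.IsStable ν) → (∀ ν ∈ T, 0 ≤ c ν) → (∑ ν ∈ T, c ν) = 1 →
    (∑ ν ∈ T, c ν • chi ν) = (2⁻¹ : ℝ) • (chi μ + chi μ') →
    ∀ ν ∈ T, c ν ≠ 0 → chi ν = chi μ ∨ chi ν = chi μ'

end SMTI

namespace SMTI

variable {M W : Type*} {I : SMTI M W} {μ μ' : Set (M × W)}

lemma mpartner_eq_some_iff (h : I.IsMatching μ) {m : M} {w : W} :
    mpartner μ m = some w ↔ (m, w) ∈ μ := by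
  unfold mpartner
  split_ifs with hex
  · rw [Option.some.injEq]
    exact ⟨fun e => e ▸ hex.choose_spec, fun hw => h.2.1 _ _ _ hex.choose_spec hw⟩
  · simpa using fun hw => hex ⟨w, hw⟩

lemma wpartner_eq_some_iff (h : I.IsMatching μ) {m : M} {w : W} :
    wpartner μ w = some m ↔ (m, w) ∈ μ := by
  unfold wpartner
  split_ifs with hex
  · rw [Option.some.injEq]
    exact ⟨fun e => e ▸ hex.choose_spec, fun hm => h.2.2 _ _ _ hex.choose_spec hm⟩
  · simpa using fun hm => hex ⟨m, hm⟩

lemma mem_starV_of_mem_union (h : I.IsMatching μ) (h' : I.IsMatching μ') {p : M × W}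
    (hp : p ∈ μ ∪ μ') : p ∈ I.starV μ μ' := by
  obtain ⟨m, w⟩ := p
  rcases hp with hp | hp
  · exact ⟨h.1 hp, .inl ((mpartner_eq_some_iff h).2 hp).symm,
      .inl ((wpartner_eq_some_iff h).2 hp).symm⟩
  · exact ⟨h'.1 hp, .inr (.inl ((mpartner_eq_some_iff h').2 hp).symm),
      .inr (.inl ((wpartner_eq_some_iff h').2 hp).symm)⟩

lemma eq_of_isIsolated {S : Set (M × W)} (hS : S ⊆ I.Acc) {v q : M × W}
    (hv : I.IsIsolated S v) (hq : q ∈ S) (hvq : v.1 = q.1 ∨ v.2 = q.2) : q = v := by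
  obtain ⟨m, w⟩ := v
  obtain ⟨m', w'⟩ := q
  by_contra hne
  have hvA := hS hv.1
  have hqA := hS hq
  refine hv.2 _ ⟨hv.1, hq, ?_⟩
  rcases hvq with rfl | rfl
  · have hw : w ≠ w' := fun e => hne (by rw [e])
    rcases I.mle_total _ _ _ hvA hqA with hle | hle
    · exact .inl ⟨hvA, hqA, .inl ⟨rfl, hw, hle⟩⟩
    · exact .inr ⟨hqA, hvA, .inl ⟨rfl, hw.symm, hle⟩⟩
  · have hm : m ≠ m' := fun e => hne (by rw [e])
    rcases I.wle_total _ _ _ hvA hqA with hle | hle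
    · exact .inl ⟨hvA, hqA, .inr ⟨rfl, hm, hle⟩⟩
    · exact .inr ⟨hqA, hvA, .inr ⟨rfl, hm.symm, hle⟩⟩

/-- Since `⊥` is strictly below every partner, `w ≤_m μ(m)` forces `m` to be matched in `μ`. -/
lemma exists_mem_of_mleO (h : I.IsMatching μ) {m : M} {w : W}
    (hle : I.mleO m (some w) (mpartner μ m)) : ∃ w', (m, w') ∈ μ := by
  cases hp : mpartner μ m with
  | none => rw [hp] at hle; exact hle.elim
  | some w' => exact ⟨w', (mpartner_eq_some_iff h).1 hp⟩

lemma exists_mem_of_wleO (h : I.IsMatching μ) {m : M} {w : W}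
    (hle : I.wleO w (some m) (wpartner μ w)) : ∃ m', (m', w) ∈ μ := by
  cases hp : wpartner μ w with
  | none => rw [hp] at hle; exact hle.elim
  | some m' => exact ⟨m', (wpartner_eq_some_iff h).1 hp⟩

/-- In a stable matching the ends of an acceptable pair cannot both be single, so if neither end
has a partner other than the opposite end, then the pair is matched. -/
lemma mem_of_isStable (h : I.IsStable μ) {v : M × W} (hv : v ∈ I.Acc)
    (hun : ∀ q ∈ μ, v.1 = q.1 ∨ v.2 = q.2 → q = v) : v ∈ μ := by
  rcases h.2 v hv with hle | hle
  · obtain ⟨w', hw'⟩ := exists_mem_of_mleO h.1 hle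
    exact hun _ hw' (.inl rfl) ▸ hw'
  · obtain ⟨m', hm'⟩ := exists_mem_of_wleO h.1 hle
    exact hun _ hm' (.inr rfl) ▸ hm'

lemma eq_of_betweenM_self {m : M} {a b : Option W} (h : I.betweenM m a b b) : a = b := by
  rcases h with h | h | h | h
  exacts [h, h, (h.1.2 h.2).elim, (h.1.2 h.2).elim]

lemma eq_of_betweenW_self {w : W} {a b : Option M} (h : I.betweenW w a b b) : a = b := by
  rcases h with h | h | h | h
  exacts [h, h, (h.1.2 h.2).elim, (h.1.2 h.2).elim]

lemma eq_of_mem_starV (h : I.IsMatching μ) (h' : I.IsMatching μ') {v q : M × W}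
    (hv : v ∈ μ ∩ μ') (hq : q ∈ I.starV μ μ') (hvq : v.1 = q.1 ∨ v.2 = q.2) : q = v := by
  obtain ⟨m, w⟩ := v
  obtain ⟨m', w'⟩ := q
  obtain ⟨-, hbm, hbw⟩ := hq
  rcases hvq with rfl | rfl
  · dsimp only at hbm
    rw [(mpartner_eq_some_iff h).2 hv.1, (mpartner_eq_some_iff h').2 hv.2] at hbm
    rw [Option.some.inj (eq_of_betweenM_self hbm)]
  · dsimp only at hbw
    rw [(wpartner_eq_some_iff h).2 hv.1, (wpartner_eq_some_iff h').2 hv.2] at hbw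
    rw [Option.some.inj (eq_of_betweenW_self hbw)]

end SMTI

open SMTI in

theorem stmt0 {M W : Type*} (I : SMTI M W) (μ μ' : Set (M × W))
    (hμ : I.IsStable μ) (hμ' : I.IsStable μ') (v : M × W) (hv : v ∈ I.Acc) :
    I.IsIsolated (I.starV μ μ') v ↔ v ∈ μ ∩ μ' := by
  constructor
  · intro hiso
    have hun : ∀ q ∈ μ ∪ μ', v.1 = q.1 ∨ v.2 = q.2 → q = v := fun q hq =>
      eq_of_isIsolated (fun _ hp => hp.1) hiso (mem_starV_of_mem_union hμ.1 hμ'.1 hq)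
    exact ⟨mem_of_isStable hμ hv fun q hq => hun q (.inl hq),
      mem_of_isStable hμ' hv fun q hq => hun q (.inr hq)⟩
  · intro hmem
    refine ⟨mem_starV_of_mem_union hμ.1 hμ'.1 (.inl hmem.1), fun q hadj => ?_⟩
    obtain ⟨-, hq, hedge⟩ := hadj
    have hshare : v.1 = q.1 ∨ v.2 = q.2 := by
      rcases hedge with ⟨-, -, he | he⟩ | ⟨-, -, he | he⟩
      exacts [.inl he.1, .inr he.1, .inl he.1.symm, .inr he.1.symm]
    -- the edge relation of `Γ` has no loops
    obtain rfl := eq_of_mem_starV hμ.1 hμ'.1 hmem hq hshare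
    rcases hedge with ⟨-, -, he | he⟩ | ⟨-, -, he | he⟩ <;> exact he.2.1 rfl
end

section
/- Let μ and μ' be stable matchings. For every man m matched in both μ and μ' with μ(m) ≠ μ'(m), the vector e_{(m, μ(m))} + e_{(m, μ'(m))} belongs to E; and for every woman w matched in both μ and μ' with μ(w) ≠ μ'(w), the vector e_{(μ(w), w)} + e_{(μ'(w), w)} belongs to E. -/
/-!
A matching contains at most one of two distinct pairs that share a person. Hence
`-x_p - x_q ≥ -1` is valid for every stable matching when `p ≠ q` share a person, and it is tight at
any matching containing one of the two. If `p ∈ μ` and `q ∈ μ'`, then `-(e_p + e_q)` is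
one of the vectors spanning `E`, so `e_p + e_q ∈ E`.
-/

open scoped Classical

namespace SMTI

variable {M W : Type*} [Fintype M] [Fintype W]

lemma dotP_neg_eVec_add (p q : M × W) (x : M × W → ℝ) :
    dotP (-(eVec p + eVec q)) x = -(x p + x q) := by
  simp [dotP, eVec, add_mul, Finset.sum_add_distrib, add_comm]

/-- If no stable matching contains both `p` and `q`, then `e_p + e_q ∈ E`
whenever `p ∈ μ` and `q ∈ μ'`. -/
lemma eVec_add_mem_Espace (I : SMTI M W) {μ μ' : Set (M × W)}
    (hμ : I.IsStable μ) (hμ' : I.IsStable μ') {p q : M × W} (hp : p ∈ μ) (hq : q ∈ μ')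
    (hpq : ∀ ν, I.IsStable ν → p ∈ ν → q ∉ ν) :
    eVec p + eVec q ∈ I.Espace μ μ' := by
  rw [← Submodule.neg_mem_iff]
  refine Submodule.subset_span ⟨fun r hr => ?_, -1, fun ν hν => ?_, ?_, ?_⟩
  · have h₁ : r ≠ p := fun h => hr (h ▸ hμ.1.1 hp)
    have h₂ : r ≠ q := fun h => hr (h ▸ hμ'.1.1 hq)
    simp [eVec, h₁, h₂]
  · have := hpq ν hν
    rw [dotP_neg_eVec_add]
    by_cases h₁ : p ∈ ν <;> by_cases h₂ : q ∈ ν <;> simp_all [chi]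
  · have := hpq μ hμ hp
    rw [dotP_neg_eVec_add]
    simp [chi, hp, this]
  · have : p ∉ μ' := fun h => hpq μ' hμ' h hq
    rw [dotP_neg_eVec_add]
    simp [chi, hq, this]

end SMTI

open SMTI in

theorem stmt3 {M W : Type*} [Fintype M] [Fintype W] (I : SMTI M W)
    (μ μ' : Set (M × W)) (hμ : I.IsStable μ) (hμ' : I.IsStable μ') :
    (∀ (m : M) (w w' : W), (m, w) ∈ μ → (m, w') ∈ μ' → w ≠ w' →
      eVec (m, w) + eVec (m, w') ∈ I.Espace μ μ') ∧
    (∀ (w : W) (m m' : M), (m, w) ∈ μ → (m', w) ∈ μ' → m ≠ m' →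
      eVec (m, w) + eVec (m', w) ∈ I.Espace μ μ') := by
  exact ⟨fun m w w' h h' hne => eVec_add_mem_Espace I hμ hμ' h h'
      fun ν hν h₁ h₂ => hne (hν.1.2.1 m w w' h₁ h₂),
    fun w m m' h h' hne => eVec_add_mem_Espace I hμ hμ' h h'
      fun ν hν h₁ h₂ => hne (hν.1.2.2 m m' w h₁ h₂)⟩
end

section
/- Let μ and μ' be stable matchings. For every pair (m,w) that is a vertex of Γ*(μ,μ') but is not in μ ∪ μ', either the vector e_{(m, μ(m))} + e_{(μ'(w), w)} belongs to E, or the vector e_{(m, μ'(m))} + e_{(μ(w), w)} belongs to E. -/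
/-!
Let `U` be the set of pairs dominating `(m, w)`, i.e. the pairs `(m, w')` with `w ≤_m w'` together
with the pairs `(m', w)` with `m ≤_w m'`. Stability says that every stable matching meets `U`, so
`1_U · x_ν ≥ 1` for every stable `ν`. Suppose `μ(m) <_m w ≤_m μ'(m)` (the other case is the same
with `μ` and `μ'` exchanged). Stability of `μ` gives `m ≤_w μ(w)`, and then betweenness for `w`
forces `μ'(w) <_w m ≤_w μ(w)`. Hence `μ ∩ U = {(μ(w), w)}` and `μ' ∩ U = {(m, μ'(m))}`: the
inequality is tight at both matchings, so `1_U ∈ E`. The indicator of `U \ (μ ∪ μ')` is also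
in `E`, since it is nonnegative and vanishes on both matchings. The difference of the two
indicators is `e_{(m, μ'(m))} + e_{(μ(w), w)}`. This is `SMTI.key` below.
-/

open scoped Classical

namespace SMTI

variable {M W : Type*} (I : SMTI M W)

lemma mem_of_mpartner {μ : Set (M × W)} {m : M} {w : W} (h : mpartner μ m = some w) :
    (m, w) ∈ μ := by
  unfold mpartner at h
  split_ifs at h with h'
  exact Option.some.inj h ▸ h'.choose_spec

lemma mem_of_wpartner {μ : Set (M × W)} {m : M} {w : W} (h : wpartner μ w = some m) :
    (m, w) ∈ μ := by
  unfold wpartner at h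
  split_ifs at h with h'
  exact Option.some.inj h ▸ h'.choose_spec

lemma mpartner_eq {μ : Set (M × W)} (hμ : I.IsMatching μ) {m : M} {w : W} (h : (m, w) ∈ μ) :
    mpartner μ m = some w := by
  have h' : ∃ w, (m, w) ∈ μ := ⟨w, h⟩
  rw [mpartner, dif_pos h', hμ.2.1 m _ _ h'.choose_spec h]

lemma wpartner_eq {μ : Set (M × W)} (hμ : I.IsMatching μ) {m : M} {w : W} (h : (m, w) ∈ μ) :
    wpartner μ w = some m := by
  have h' : ∃ m, (m, w) ∈ μ := ⟨m, h⟩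
  rw [wpartner, dif_pos h', hμ.2.2 _ _ w h'.choose_spec h]

lemma mleO_some {m : M} {w : W} {b : Option W} (h : I.mleO m (some w) b) :
    ∃ w₁, b = some w₁ ∧ I.mle m w w₁ := by
  cases b with
  | none => exact h.elim
  | some w₁ => exact ⟨w₁, rfl, h⟩

lemma wleO_some {w : W} {m : M} {b : Option M} (h : I.wleO w (some m) b) :
    ∃ m₁, b = some m₁ ∧ I.wle w m m₁ := by
  cases b with
  | none => exact h.elim
  | some m₁ => exact ⟨m₁, rfl, h⟩

lemma betweenW_symm {w : W} {a b c : Option M} (h : I.betweenW w a b c) :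
    I.betweenW w a c b := by
  unfold betweenW at *; tauto

/-- The pairs dominating `(m, w)`: the set `U` on which every stable matching has a pair. -/
def up (m : M) (w : W) : Set (M × W) :=
  {p | (p.1 = m ∧ I.mle m w p.2) ∨ (p.2 = w ∧ I.wle w m p.1)}

variable {I}

lemma up_subset {m : M} {w : W} : I.up m w ⊆ I.Acc := by
  rintro ⟨a, b⟩ (⟨h, h'⟩ | ⟨h, h'⟩)
  · obtain rfl : a = m := h
    exact (I.mle_mem _ _ _ h').2
  · obtain rfl : b = w := h
    exact (I.wle_mem _ _ _ h').2

lemma exists_mem_up {ν : Set (M × W)} (hν : I.IsStable ν) {m : M} {w : W}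
    (h : (m, w) ∈ I.Acc) : ∃ p ∈ ν, p ∈ I.up m w := by
  rcases hν.2 _ h with h | h
  · obtain ⟨w₁, h1, h2⟩ := I.mleO_some h
    exact ⟨_, mem_of_mpartner h1, Or.inl ⟨rfl, h2⟩⟩
  · obtain ⟨m₁, h1, h2⟩ := I.wleO_some h
    exact ⟨_, mem_of_wpartner h1, Or.inr ⟨rfl, h2⟩⟩

variable [Fintype M] [Fintype W]

lemma Espace_comm (μ μ' : Set (M × W)) : I.Espace μ μ' = I.Espace μ' μ := by
  unfold Espace
  congr 1
  ext α
  simp only [Set.mem_ofPred_eq, and_comm (a := dotP α (chi μ) = _)]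

/-- A set meeting `ν` in the single pair `q` has inner product one with `ν`. -/
lemma dotP_chi_eq_one {S ν : Set (M × W)} {q : M × W} (hS : q ∈ S) (hq : q ∈ ν)
    (h : ∀ p ∈ ν, p ∈ S → p = q) : dotP (chi S) (chi ν) = 1 := by
  unfold dotP
  rw [Finset.sum_eq_single q]
  · simp [chi, hS, hq]
  · intro p _ hp
    by_cases h1 : p ∈ ν <;> by_cases h2 : p ∈ S
    · exact absurd (h p h1 h2) hp
    all_goals simp [chi, h1, h2]
  · simp

lemma dotP_chi_nonneg (S ν : Set (M × W)) : 0 ≤ dotP (chi S) (chi ν) := by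
  refine Finset.sum_nonneg fun p _ => mul_nonneg ?_ ?_ <;> unfold chi <;> split_ifs <;> norm_num

lemma one_le_dotP_chi {S ν : Set (M × W)} {q : M × W} (hS : q ∈ S) (hq : q ∈ ν) :
    1 ≤ dotP (chi S) (chi ν) := by
  have h := Finset.single_le_sum (f := fun p => chi S p * chi ν p) (s := Finset.univ)
    (fun p _ => by
      refine mul_nonneg ?_ ?_ <;> unfold chi <;> split_ifs <;> norm_num) (Finset.mem_univ q)
  simpa [chi, hS, hq, dotP] using h

lemma dotP_chi_eq_zero {S ν : Set (M × W)} (h : ∀ p ∈ ν, p ∉ S) :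
    dotP (chi S) (chi ν) = 0 := by
  refine Finset.sum_eq_zero fun p _ => ?_
  by_cases h1 : p ∈ ν
  · simp [chi, h p h1]
  · simp [chi, h1]

/-- The case in which `m` strictly prefers `w` to `μ(m)` and weakly prefers `μ'(m)` to `w`. -/
lemma key {μ μ' : Set (M × W)} (hμ : I.IsStable μ) (hμ' : I.IsStable μ')
    {m : M} {w : W} (hA : (m, w) ∈ I.Acc) (h : (m, w) ∉ μ) (h' : (m, w) ∉ μ')
    (h1 : I.mltO m (mpartner μ m) (some w)) (h2 : I.mleO m (some w) (mpartner μ' m))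
    (hW : I.betweenW w (some m) (wpartner μ w) (wpartner μ' w)) :
    ∃ (w₁ : W) (m₁ : M), (m, w₁) ∈ μ' ∧ (m₁, w) ∈ μ ∧
        eVec (m, w₁) + eVec (m₁, w) ∈ I.Espace μ μ' := by
  have h3 : I.wleO w (some m) (wpartner μ w) := (hμ.2 _ hA).resolve_left h1.2
  have h4 : I.wltO w (wpartner μ' w) (some m) := by
    rcases hW with e | e | e | e
    · exact absurd (mem_of_wpartner e.symm) h
    · exact absurd (mem_of_wpartner e.symm) h'
    · exact absurd h3 e.1.2
    · exact e.1
  obtain ⟨w₁, hw₁, hw⟩ := I.mleO_some h2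
  obtain ⟨m₁, hm₁, hm⟩ := I.wleO_some h3
  have hp' := mem_of_mpartner hw₁
  have hp := mem_of_wpartner hm₁
  have u : ∀ p ∈ μ, p ∈ I.up m w → p = (m₁, w) := by
    rintro ⟨a, b⟩ hab (⟨e, hl⟩ | ⟨e, hl⟩)
    · obtain rfl : a = m := e
      have := h1.2
      rw [I.mpartner_eq hμ.1 hab] at this
      exact absurd hl this
    · obtain rfl : b = w := e
      rw [hμ.1.2.2 _ _ _ hab hp]
  have u' : ∀ p ∈ μ', p ∈ I.up m w → p = (m, w₁) := by
    rintro ⟨a, b⟩ hab (⟨e, hl⟩ | ⟨e, hl⟩)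
    · obtain rfl : a = m := e
      rw [hμ'.1.2.1 _ _ _ hab hp']
    · obtain rfl : b = w := e
      have := h4.2
      rw [I.wpartner_eq hμ'.1 hab] at this
      exact absurd hl this
  have hU : (m₁, w) ∈ I.up m w := Or.inr ⟨rfl, hm⟩
  have hU' : (m, w₁) ∈ I.up m w := Or.inl ⟨rfl, hw⟩
  have hne : (m, w₁) ≠ (m₁, w) := by
    intro e
    have e2 : w₁ = w := (Prod.ext_iff.1 e).2
    exact h' (e2 ▸ hp')
  refine ⟨w₁, m₁, hp', hp, ?_⟩
  have e : eVec (m, w₁) + eVec (m₁, w) =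
      chi (I.up m w) - chi (I.up m w \ (μ ∪ μ')) := by
    ext p
    by_cases c1 : p = (m, w₁)
    · subst c1
      simp [eVec, chi, hU', hp', -Prod.mk.injEq, hne]
    by_cases c2 : p = (m₁, w)
    · subst c2
      simp [eVec, chi, hU, hp, -Prod.mk.injEq, hne.symm]
    by_cases c3 : p ∈ I.up m w
    · have n1 : p ∉ μ := fun q => c2 (u p q c3)
      have n2 : p ∉ μ' := fun q => c1 (u' p q c3)
      simp [eVec, chi, c1, c2, c3, n1, n2]
    · simp [eVec, chi, c1, c2, c3]
  rw [e]
  refine Submodule.sub_mem _ (Submodule.subset_span ⟨fun p hpA => ?_, 1, fun ν hν => ?_, ?_, ?_⟩)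
    (Submodule.subset_span ⟨fun p hpA => ?_, 0, fun ν _ => dotP_chi_nonneg _ _, ?_, ?_⟩)
  · exact if_neg fun q => hpA (up_subset q)
  · obtain ⟨q, hq, hqU⟩ := exists_mem_up hν hA
    exact one_le_dotP_chi hqU hq
  · exact dotP_chi_eq_one hU hp u
  · exact dotP_chi_eq_one hU' hp' u'
  · exact if_neg fun q => hpA (up_subset q.1)
  · exact dotP_chi_eq_zero fun p hp q => q.2 (Or.inl hp)
  · exact dotP_chi_eq_zero fun p hp q => q.2 (Or.inr hp)

end SMTI

open SMTI in

theorem stmt4 {M W : Type*} [Fintype M] [Fintype W] (I : SMTI M W)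
    (μ μ' : Set (M × W)) (hμ : I.IsStable μ) (hμ' : I.IsStable μ')
    (m : M) (w : W) (hv : (m, w) ∈ I.starV μ μ') (hnv : (m, w) ∉ μ ∪ μ') :
    (∃ (w₁ : W) (m₁ : M), (m, w₁) ∈ μ ∧ (m₁, w) ∈ μ' ∧
        eVec (m, w₁) + eVec (m₁, w) ∈ I.Espace μ μ') ∨
    (∃ (w₁ : W) (m₁ : M), (m, w₁) ∈ μ' ∧ (m₁, w) ∈ μ ∧
        eVec (m, w₁) + eVec (m₁, w) ∈ I.Espace μ μ') := by
  obtain ⟨hA, hM, hW⟩ := hv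
  have n1 : (m, w) ∉ μ := fun q => hnv (Or.inl q)
  have n2 : (m, w) ∉ μ' := fun q => hnv (Or.inr q)
  rcases hM with e | e | e | e
  · exact absurd (mem_of_mpartner e.symm) n1
  · exact absurd (mem_of_mpartner e.symm) n2
  · exact Or.inr (key hμ hμ' hA n1 n2 e.1 e.2 hW)
  · left
    rw [Espace_comm]
    exact key hμ' hμ hA n2 n1 e.1 e.2 (I.betweenW_symm hW)
end

section
/- Let μ and μ' be stable matchings, and let (m,w) be a vertex of Γ*(μ,μ') that is not in μ ∪ μ'. Then either (i) w ≤_m μ(m) and m ≤_w μ'(w), or (ii) w ≤_m μ'(m) and m ≤_w μ(w). -/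
open scoped Classical

open SMTI in

theorem stmt5 {M W : Type*} (I : SMTI M W) (μ μ' : Set (M × W))
    (hμ : I.IsStable μ) (hμ' : I.IsStable μ')
    (m : M) (w : W) (hv : (m, w) ∈ I.starV μ μ') (hnv : (m, w) ∉ μ ∪ μ') :
    (I.mleO m (some w) (mpartner μ m) ∧ I.wleO w (some m) (wpartner μ' w)) ∨
    (I.mleO m (some w) (mpartner μ' m) ∧ I.wleO w (some m) (wpartner μ w)) := by
  obtain ⟨hacc, hb, -⟩ := hv
  have key : ∀ ν : Set (M × W), some w = mpartner ν m → (m, w) ∈ ν := by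
    intro ν h
    unfold mpartner at h
    split_ifs at h with hex
    rw [Option.some.inj h]
    exact hex.choose_spec
  -- `w` lies strictly above one of `μ(m)`, `μ'(m)` and weakly below the other; since the
  -- first matching is stable and `m` prefers `w` to his partner there, `w` does not prefer `m`.
  rcases hb with h | h | ⟨hlt, hle⟩ | ⟨hlt, hle⟩
  · exact absurd (Or.inl (key μ h)) hnv
  · exact absurd (Or.inr (key μ' h)) hnv
  · exact Or.inr ⟨hle, (hμ.2 _ hacc).resolve_left hlt.2⟩
  · exact Or.inl ⟨hle, (hμ'.2 _ hacc).resolve_left hlt.2⟩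
end
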